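/- arXiv:1609.03043 — 4 statements merged into one kernel-verified Lean document; each statement's English description precedes it below -/
import Mathlib

section
/- Let D ⊂ ℝ³ be a nonempty bounded open convex set and ℓ > 0. Then the four-dimensional Lebesgue measure of the set of positioned segments contained in D, namely of {(p,θ,t,h) ∈ ℝ × [0,2π) × ℝ × ℝ : ∀ s ∈ [h, h+ℓ], γ_{p,θ,t}(s) ∈ D}, equals ∫_{θ∈[0,2π)} ∫_{p∈ℝ} ∫_{t∈ℝ} max(σ(p,θ,t) − ℓ, 0) dt dp dθ, where σ(p,θ,t) is the chord length of γ_{p,θ,t} in D. -/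
open MeasureTheory Real Set

noncomputable section

/-- The oriented horizontal line `γ_{p,θ,t}` in the Heisenberg group `H₁ = ℝ³`,
parametrized by horizontal arclength `s`. -/
def hLine (p θ t s : ℝ) : ℝ × ℝ × ℝ :=
  (p * Real.cos θ + s * Real.sin θ, p * Real.sin θ - s * Real.cos θ, t + s * p)

/-!
By convexity the parameters at which a horizontal line meets `D` form an interval `A ⊆ ℝ`, and the
segment starting at `h` stays in `D` exactly when `h` and `h + ℓ` both lie in `A`. The admissible
`h` therefore form the interval `A` shortened by `ℓ`, which has length `max (|A| - ℓ) 0`. Integrating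
over all lines with Tonelli's theorem gives the kinematic measure.
-/

section OrdConnected

variable {A : Set ℝ} {ℓ : ℝ}

lemma volume_eq_top_of_not_bddAbove (hA : A.OrdConnected) (hbdd : ¬BddAbove A) :
    volume A = ⊤ := by
  obtain ⟨x, hx⟩ := nonempty_of_not_bddAbove hbdd
  have hsub : Ici x ⊆ A := fun y hxy =>
    let ⟨_z, hz, hyz⟩ := not_bddAbove_iff.1 hbdd y
    hA.out hx hz ⟨hxy, hyz.le⟩
  exact measure_mono_top hsub Real.volume_Ici

lemma volume_eq_top_of_not_bddBelow (hA : A.OrdConnected) (hbdd : ¬BddBelow A) :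
    volume A = ⊤ := by
  obtain ⟨x, hx⟩ := nonempty_of_not_bddBelow hbdd
  have hsub : Iic x ⊆ A := fun y hyx =>
    let ⟨_z, hz, hzy⟩ := not_bddBelow_iff.1 hbdd y
    hA.out hz hx ⟨hzy.le, hyx⟩
  exact measure_mono_top hsub Real.volume_Iic

lemma volume_eq_ofReal_of_Ioo_subset_of_subset_Icc {a b : ℝ} (hIoo : Ioo a b ⊆ A)
    (hIcc : A ⊆ Icc a b) : volume A = ENNReal.ofReal (b - a) :=
  le_antisymm ((measure_mono hIcc).trans_eq Real.volume_Icc)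
    (Real.volume_Ioo.symm.trans_le (measure_mono hIoo))

lemma Icc_add_subset_iff (hA : A.OrdConnected) (hℓ : 0 ≤ ℓ) {h : ℝ} :
    Icc h (h + ℓ) ⊆ A ↔ h ∈ A ∧ h + ℓ ∈ A := by
  have hle : h ≤ h + ℓ := le_add_of_nonneg_right hℓ
  exact ⟨fun hI => ⟨hI (left_mem_Icc.2 hle), hI (right_mem_Icc.2 hle)⟩,
    fun hh => hA.out hh.1 hh.2⟩

lemma volume_setOf_Icc_add_subset_of_bdd (hA : A.OrdConnected) (hbelow : BddBelow A)
    (habove : BddAbove A) (hℓ : 0 ≤ ℓ) :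
    volume {h | Icc h (h + ℓ) ⊆ A} = volume A - ENNReal.ofReal ℓ := by
  rcases A.eq_empty_or_nonempty with rfl | hne
  · simp [Icc_eq_empty_iff, hℓ]
  have hIoo : Ioo (sInf A) (sSup A) ⊆ A :=
    IsConnected.Ioo_csInf_csSup_subset ⟨hne, hA.isPreconnected⟩ hbelow habove
  have hIcc : A ⊆ Icc (sInf A) (sSup A) := subset_Icc_csInf_csSup hbelow habove
  have hIoo' : Ioo (sInf A) (sSup A - ℓ) ⊆ {h | Icc h (h + ℓ) ⊆ A} := fun h hh =>
    (Icc_add_subset_iff hA hℓ).2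
      ⟨hIoo ⟨hh.1, by linarith [hh.2]⟩, hIoo ⟨by linarith [hh.1], by linarith [hh.2]⟩⟩
  have hIcc' : {h | Icc h (h + ℓ) ⊆ A} ⊆ Icc (sInf A) (sSup A - ℓ) := fun h hh =>
    have ⟨hh₀, hh₁⟩ := (Icc_add_subset_iff hA hℓ).1 hh
    ⟨(hIcc hh₀).1, by linarith [(hIcc hh₁).2]⟩
  rw [volume_eq_ofReal_of_Ioo_subset_of_subset_Icc hIoo hIcc,
    volume_eq_ofReal_of_Ioo_subset_of_subset_Icc hIoo' hIcc', ← ENNReal.ofReal_sub _ hℓ,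
    sub_right_comm]

lemma volume_setOf_Icc_add_subset (hA : A.OrdConnected) (hℓ : 0 ≤ ℓ) :
    volume {h | Icc h (h + ℓ) ⊆ A} = volume A - ENNReal.ofReal ℓ := by
  by_cases habove : BddAbove A
  · by_cases hbelow : BddBelow A
    · exact volume_setOf_Icc_add_subset_of_bdd hA hbelow habove hℓ
    · have hshift : {h | Icc h (h + ℓ) ⊆ A} = (· + ℓ) ⁻¹' A := by
        ext h
        refine (Icc_add_subset_iff hA hℓ).trans (and_iff_right_of_imp fun hh => ?_)
        obtain ⟨x, hx, hxh⟩ := not_bddBelow_iff.1 hbelow h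
        exact hA.out hx hh ⟨hxh.le, le_add_of_nonneg_right hℓ⟩
      rw [hshift, measure_preimage_add_right, volume_eq_top_of_not_bddBelow hA hbelow,
        ENNReal.top_sub ENNReal.ofReal_ne_top]
  · have hself : {h | Icc h (h + ℓ) ⊆ A} = A := by
      ext h
      refine (Icc_add_subset_iff hA hℓ).trans (and_iff_left_of_imp fun hh => ?_)
      obtain ⟨x, hx, hhx⟩ := not_bddAbove_iff.1 habove (h + ℓ)
      exact hA.out hh hx ⟨le_add_of_nonneg_right hℓ, hhx.le⟩
    rw [hself, volume_eq_top_of_not_bddAbove hA habove, ENNReal.top_sub ENNReal.ofReal_ne_top]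

end OrdConnected

section TripleProduct

variable {α β γ : Type*} [MeasurableSpace α] [MeasurableSpace β] [MeasurableSpace γ]
  (μ : Measure α) (ν : Measure β) (τ : Measure γ) [SFinite μ] [SFinite ν] [SFinite τ]
  {S : Set (α × β × γ)}

lemma prod_prod_apply_swap (hS : MeasurableSet S) :
    μ.prod (ν.prod τ) S = ∫⁻ y, ∫⁻ x, τ {z | (x, y, z) ∈ S} ∂μ ∂ν := by
  have hmeas : Measurable fun xy : α × β => τ {z | (xy.1, xy.2, z) ∈ S} :=
    measurable_measure_prodMk_left (MeasurableEquiv.prodAssoc.measurable hS)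
  calc μ.prod (ν.prod τ) S
      = ∫⁻ x, ∫⁻ y, τ {z | (x, y, z) ∈ S} ∂ν ∂μ := by
        rw [Measure.prod_apply hS]
        exact lintegral_congr fun x => Measure.prod_apply (measurable_prodMk_left hS)
    _ = ∫⁻ y, ∫⁻ x, τ {z | (x, y, z) ∈ S} ∂μ ∂ν :=
        lintegral_lintegral_swap hmeas.aemeasurable

lemma prod_prod_apply_setOf_mem_and (I : Set β) (hS : MeasurableSet S) :
    μ.prod (ν.prod τ) {q | q.2.1 ∈ I ∧ q ∈ S} =
      ∫⁻ y in I, ∫⁻ x, τ {z | (x, y, z) ∈ S} ∂μ ∂ν := by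
  have hrestrict : (μ.prod (ν.prod τ)).restrict (univ ×ˢ I ×ˢ univ) =
      μ.prod ((ν.restrict I).prod τ) := by
    simp only [← Measure.prod_restrict, Measure.restrict_univ]
  have hinter : {q : α × β × γ | q.2.1 ∈ I ∧ q ∈ S} = S ∩ univ ×ˢ I ×ˢ univ := by
    ext q
    simp [and_comm]
  rw [hinter, ← Measure.restrict_apply hS, hrestrict, prod_prod_apply_swap _ _ _ hS]

end TripleProduct

section hLine

variable {D : Set (ℝ × ℝ × ℝ)} {ℓ : ℝ}

lemma measurable_hLine : Measurable fun q : ℝ × ℝ × ℝ × ℝ => hLine q.1 q.2.1 q.2.2.1 q.2.2.2 := by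
  unfold hLine
  fun_prop

lemma hLine_eq_lineMap (p θ t : ℝ) :
    hLine p θ t = AffineMap.lineMap (hLine p θ t 0) (hLine p θ t 1) := by
  ext s <;>
  · simp only [hLine, AffineMap.lineMap_apply_module, Prod.smul_mk, Prod.mk_add_mk, smul_eq_mul]
    ring

lemma ordConnected_preimage_hLine (hconv : Convex ℝ D) (p θ t : ℝ) :
    (hLine p θ t ⁻¹' D).OrdConnected := by
  rw [hLine_eq_lineMap]
  exact (hconv.affine_preimage _).ordConnected

/-- The positioned segments of length `ℓ` contained in `D`, encoded by the parameters
`(p, θ, t, h)` of the segment `hLine p θ t '' Icc h (h + ℓ)`. The angle `θ` ranges over all of `ℝ`,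
so each segment recurs with period `2 * π` in `θ`. -/
def segmentsInside (D : Set (ℝ × ℝ × ℝ)) (ℓ : ℝ) : Set (ℝ × ℝ × ℝ × ℝ) :=
  {q | Icc q.2.2.2 (q.2.2.2 + ℓ) ⊆ hLine q.1 q.2.1 q.2.2.1 ⁻¹' D}

lemma measurableSet_segmentsInside (hconv : Convex ℝ D) (hD : MeasurableSet D) (hℓ : 0 ≤ ℓ) :
    MeasurableSet (segmentsInside D ℓ) := by
  have hends : segmentsInside D ℓ = {q | hLine q.1 q.2.1 q.2.2.1 q.2.2.2 ∈ D} ∩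
      {q | hLine q.1 q.2.1 q.2.2.1 (q.2.2.2 + ℓ) ∈ D} :=
    Set.ext fun q => Icc_add_subset_iff (ordConnected_preimage_hLine hconv _ _ _) hℓ
  have hshift : Measurable fun q : ℝ × ℝ × ℝ × ℝ => (q.1, q.2.1, q.2.2.1, q.2.2.2 + ℓ) := by
    fun_prop
  rw [hends]
  exact (measurable_hLine hD).inter ((measurable_hLine.comp hshift) hD)

lemma volume_setOf_mem_segmentsInside (hconv : Convex ℝ D) (hD : MeasurableSet D) (hℓ : 0 ≤ ℓ)
    (p θ : ℝ) :
    volume {th : ℝ × ℝ | (p, θ, th) ∈ segmentsInside D ℓ} =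
      ∫⁻ t, (volume (hLine p θ t ⁻¹' D) - ENNReal.ofReal ℓ) := by
  have hslice : MeasurableSet {th : ℝ × ℝ | (p, θ, th) ∈ segmentsInside D ℓ} :=
    measurable_prodMk_left (measurable_prodMk_left (measurableSet_segmentsInside hconv hD hℓ))
  rw [Measure.volume_eq_prod, Measure.prod_apply hslice]
  exact lintegral_congr fun t =>
    volume_setOf_Icc_add_subset (ordConnected_preimage_hLine hconv p θ t) hℓ

end hLine

theorem measure_segments_inside_convex_general
    (D : Set (ℝ × ℝ × ℝ)) (hconv : Convex ℝ D) (hD : MeasurableSet D) (ℓ : ℝ) (hℓ : 0 ≤ ℓ) :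
    volume {q : ℝ × ℝ × ℝ × ℝ | q.2.1 ∈ Set.Ico (0 : ℝ) (2 * π) ∧
        ∀ s ∈ Set.Icc q.2.2.2 (q.2.2.2 + ℓ), hLine q.1 q.2.1 q.2.2.1 s ∈ D} =
      ∫⁻ θ in Set.Ico (0 : ℝ) (2 * π), ∫⁻ p : ℝ, ∫⁻ t : ℝ,
        (volume {s : ℝ | hLine p θ t s ∈ D} - ENNReal.ofReal ℓ) :=
  calc volume {q : ℝ × ℝ × ℝ × ℝ | q.2.1 ∈ Ico (0 : ℝ) (2 * π) ∧ q ∈ segmentsInside D ℓ}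
      = ∫⁻ θ in Ico (0 : ℝ) (2 * π), ∫⁻ p : ℝ,
          volume {th : ℝ × ℝ | (p, θ, th) ∈ segmentsInside D ℓ} :=
        prod_prod_apply_setOf_mem_and _ _ _ _ (measurableSet_segmentsInside hconv hD hℓ)
    _ = ∫⁻ θ in Ico (0 : ℝ) (2 * π), ∫⁻ p : ℝ, ∫⁻ t : ℝ,
          (volume (hLine p θ t ⁻¹' D) - ENNReal.ofReal ℓ) := by
        simp only [volume_setOf_mem_segmentsInside hconv hD hℓ]

/-- Kinematic measure of positioned segments of length `ℓ` contained in a nonempty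
bounded open convex set `D ⊂ ℝ³`: the 4-dimensional Lebesgue measure (density
`dp dθ dt dh`, `θ ∈ [0,2π)`) of `{(p,θ,t,h) : ∀ s ∈ [h,h+ℓ], γ_{p,θ,t}(s) ∈ D}`
is the integral over all horizontal lines of `max(σ(p,θ,t) − ℓ, 0)`, where
`σ(p,θ,t) = Leb¹{s : γ_{p,θ,t}(s) ∈ D}` is the chord length (here `x - y` is
`ℝ≥0∞`-truncated subtraction, i.e. `max(x − y, 0)`). -/
theorem measure_segments_inside_convex
    (D : Set (ℝ × ℝ × ℝ)) (hne : D.Nonempty) (hconv : Convex ℝ D)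
    (hbdd : Bornology.IsBounded D) (hopen : IsOpen D)
    (ℓ : ℝ) (hℓ : 0 < ℓ) :
    volume {q : ℝ × ℝ × ℝ × ℝ | q.2.1 ∈ Set.Ico (0 : ℝ) (2 * π) ∧
        ∀ s ∈ Set.Icc q.2.2.2 (q.2.2.2 + ℓ), hLine q.1 q.2.1 q.2.2.1 s ∈ D} =
      ∫⁻ θ in Set.Ico (0 : ℝ) (2 * π), ∫⁻ p : ℝ, ∫⁻ t : ℝ,
        (volume {s : ℝ | hLine p θ t s ∈ D} - ENNReal.ofReal ℓ) := by
  exact measure_segments_inside_convex_general D hconv hopen.measurableSet ℓ hℓ.le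
end
end

section
/- Let D₁ ⊆ D₂ ⊂ ℝ³ be nonempty bounded open convex sets and ℓ > 0. Then the ratio of the four-dimensional Lebesgue measure of {(p,θ,t,h) : ∃ s ∈ [h,h+ℓ], γ_{p,θ,t}(s) ∈ D₁} to that of {(p,θ,t,h) : ∃ s ∈ [h,h+ℓ], γ_{p,θ,t}(s) ∈ D₂} (the probability that a random positioned segment of length ℓ meeting D₂ also meets D₁) equals (2π·vol(D₁) + ℓ·m(D₁)) / (2π·vol(D₂) + ℓ·m(D₂)), where vol(Dᵢ) is the Lebesgue volume of Dᵢ and m(Dᵢ) is the three-dimensional Lebesgue measure of {(p,θ,t) ∈ ℝ × [0,2π) × ℝ : ∃ s ∈ ℝ, γ_{p,θ,t}(s) ∈ Dᵢ}. -/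
/-!
A reflection of the `(p, s)`-plane followed by a shear in `t` shows that, for each angle `θ`, the
map `(p, t, s) ↦ γ_{p,θ,t}(s)` preserves volume; hence the parameters `s` with `γ_{p,θ,t}(s) ∈ D`
have total measure `2π · vol D` over all lines. Each line that meets `D` does so in an interval `I`,
and `[h, h + ℓ]` meets `I` exactly when `h ∈ I - [0, ℓ]`, an interval longer than `I` by `ℓ`.
Integrating over the lines gives `2π · vol D + ℓ · m(D)` for the segments meeting `D`.
-/

open MeasureTheory Real Set

noncomputable section

/-- The set of positioned segments of length `ℓ` meeting `D` (density `dp dθ dt dh`,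
`θ ∈ [0,2π)`). -/
def segMeet (D : Set (ℝ × ℝ × ℝ)) (ℓ : ℝ) : Set (ℝ × ℝ × ℝ × ℝ) :=
  {q | q.2.1 ∈ Set.Ico (0 : ℝ) (2 * π) ∧
    ∃ s ∈ Set.Icc q.2.2.2 (q.2.2.2 + ℓ), hLine q.1 q.2.1 q.2.2.1 s ∈ D}

/-- The set of oriented horizontal lines meeting `D`. -/
def lineMeet (D : Set (ℝ × ℝ × ℝ)) : Set (ℝ × ℝ × ℝ) :=
  {q | q.2.1 ∈ Set.Ico (0 : ℝ) (2 * π) ∧ ∃ s : ℝ, hLine q.1 q.2.1 q.2.2 s ∈ D}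

section Thickening

theorem volume_setOf_exists_mem_Icc_add {S : Set ℝ} (hS : S.OrdConnected) (hne : S.Nonempty)
    {ℓ : ℝ} (hℓ : 0 ≤ ℓ) :
    volume {h | ∃ s ∈ Icc h (h + ℓ), s ∈ S} = volume S + ENNReal.ofReal ℓ := by
  obtain ⟨c, hc⟩ := hne
  -- Cut at a point `c` of `S`: the part of `S` below `c` is moved by `-ℓ`, and the gap of length
  -- `ℓ` that this opens below `c` is filled, because the segments starting there contain `c`.
  have hdecomp : {h | ∃ s ∈ Icc h (h + ℓ), s ∈ S} =
      ((· + ℓ) ⁻¹' (S \ Ici c) ∪ Ico (c - ℓ) c) ∪ (S ∩ Ici c) := by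
    ext h
    simp only [mem_ofPred_eq, mem_union, mem_preimage, mem_sdiff, mem_inter_iff, mem_Ico, mem_Icc,
      mem_Ici, not_le]
    constructor
    · rintro ⟨s, ⟨hhs, hsℓ⟩, hs⟩
      rcases le_or_gt c h with hch | hhc
      · exact .inr ⟨hS.out hc hs ⟨hch, hhs⟩, hch⟩
      rcases le_or_gt c (h + ℓ) with hcℓ | hℓc
      · exact .inl (.inr ⟨by linarith, hhc⟩)
      · exact .inl (.inl ⟨hS.out hs hc ⟨hsℓ, hℓc.le⟩, hℓc⟩)
    · rintro ((⟨hs, -⟩ | ⟨hcℓ, hhc⟩) | ⟨hs, -⟩)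
      · exact ⟨h + ℓ, ⟨by linarith, le_rfl⟩, hs⟩
      · exact ⟨c, ⟨hhc.le, by linarith⟩, hc⟩
      · exact ⟨h, ⟨le_rfl, by linarith⟩, hs⟩
  have hdisj_left : Disjoint ((· + ℓ) ⁻¹' (S \ Ici c)) (Ico (c - ℓ) c) := by
    refine disjoint_left.2 fun h hh hI => hh.2 ?_
    simpa [sub_le_iff_le_add] using hI.1
  have hdisj_right :
      Disjoint ((· + ℓ) ⁻¹' (S \ Ici c) ∪ Ico (c - ℓ) c) (S ∩ Ici c) := by
    refine disjoint_left.2 fun h hh hI => ?_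
    rcases hh with hh | hh
    · exact hh.2 (le_add_of_le_of_nonneg hI.2 hℓ)
    · exact hh.2.not_ge hI.2
  rw [hdecomp, measure_union hdisj_right (hS.measurableSet.inter measurableSet_Ici),
    measure_union hdisj_left measurableSet_Ico, measure_preimage_add_right, Real.volume_Ico,
    sub_sub_cancel, add_right_comm, measure_sdiff_add_inter _ measurableSet_Ici]

variable {X : Type*}

/-- The positioned segments of length `ℓ` meeting `E`, where a point of `X × ℝ` is a line together
with a parameter on it, and the segment from `(x, h)` is `{x} × [h, h + ℓ]`. -/
def fiberThickening (ℓ : ℝ) (E : Set (X × ℝ)) : Set (X × ℝ) :=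
  {q | ∃ s ∈ Icc q.2 (q.2 + ℓ), (q.1, s) ∈ E}

theorem isOpen_fiberThickening [TopologicalSpace X] (ℓ : ℝ) {E : Set (X × ℝ)} (hE : IsOpen E) :
    IsOpen (fiberThickening ℓ E) := by
  have : fiberThickening ℓ E = ⋃ u ∈ Icc 0 ℓ, (fun q : X × ℝ => (q.1, q.2 + u)) ⁻¹' E := by
    ext ⟨x, h⟩
    simp only [fiberThickening, mem_ofPred_eq, mem_iUnion, mem_preimage, exists_prop]
    constructor
    · rintro ⟨s, ⟨hhs, hsℓ⟩, hs⟩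
      exact ⟨s - h, ⟨by linarith, by linarith⟩, by simpa using hs⟩
    · rintro ⟨u, ⟨hu, huℓ⟩, hs⟩
      exact ⟨h + u, ⟨by linarith, by linarith⟩, hs⟩
  rw [this]
  exact isOpen_biUnion fun u _ => hE.preimage (by fun_prop)

theorem prod_volume_fiberThickening [TopologicalSpace X] [MeasurableSpace X]
    [OpensMeasurableSpace X] (μ : Measure X) {E : Set (X × ℝ)} (hE : IsOpen E)
    (hfiber : ∀ x, (Prod.mk x ⁻¹' E).OrdConnected) {ℓ : ℝ} (hℓ : 0 ≤ ℓ) :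
    μ.prod volume (fiberThickening ℓ E) =
      μ.prod volume E + ENNReal.ofReal ℓ * μ (Prod.fst '' E) := by
  have hfiber_volume (x : X) : volume (Prod.mk x ⁻¹' fiberThickening ℓ E) =
      volume (Prod.mk x ⁻¹' E) + (Prod.fst '' E).indicator (fun _ => ENNReal.ofReal ℓ) x := by
    by_cases hx : x ∈ Prod.fst '' E
    · obtain ⟨⟨x, s⟩, hs, rfl⟩ := hx
      rw [indicator_of_mem (mem_image_of_mem _ hs)]
      exact volume_setOf_exists_mem_Icc_add (hfiber x) ⟨s, hs⟩ hℓ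
    · have hempty : ∀ s, (x, s) ∉ E := fun s hs => hx ⟨_, hs, rfl⟩
      simp [fiberThickening, preimage, hempty, hx]
  rw [Measure.prod_apply (isOpen_fiberThickening ℓ hE).measurableSet,
    lintegral_congr hfiber_volume,
    lintegral_add_left (measurable_measure_prodMk_left hE.measurableSet),
    lintegral_indicator_const (isOpenMap_fst _ hE).measurableSet,
    Measure.prod_apply hE.measurableSet]

end Thickening

section ProductMeasures

variable {α β γ δ : Type*}

theorem volume_restrict_snd_fst [MeasureSpace α] [MeasureSpace β] [MeasureSpace γ]
    [SFinite (volume : Measure α)] [SFinite (volume : Measure β)] [SFinite (volume : Measure γ)]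
    (s : Set β) :
    (volume : Measure (α × β × γ)).restrict {q | q.2.1 ∈ s} =
      volume.prod ((volume.restrict s).prod volume) := by
  have : {q : α × β × γ | q.2.1 ∈ s} = univ ×ˢ s ×ˢ univ := by
    ext
    simp
  rw [this, Measure.volume_eq_prod, ← Measure.prod_restrict, Measure.volume_eq_prod,
    ← Measure.prod_restrict, Measure.restrict_univ, Measure.restrict_univ]

variable [MeasurableSpace α] [MeasurableSpace β] [MeasurableSpace γ] [MeasurableSpace δ]

theorem measurePreserving_prod_left_comm (μ : Measure α) (ν : Measure β) (ρ : Measure γ)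
    [SFinite μ] [SFinite ν] [SFinite ρ] :
    MeasurePreserving (fun q : α × β × γ => (q.2.1, q.1, q.2.2))
      (μ.prod (ν.prod ρ)) (ν.prod (μ.prod ρ)) :=
  (measurePreserving_prodAssoc ν μ ρ).comp <|
    (Measure.measurePreserving_swap.prod (.id ρ)).comp <|
      (measurePreserving_prodAssoc μ ν ρ).symm

theorem measurePreserving_prod_split_last (μ : Measure α) (ν : Measure β) (ρ : Measure γ)
    (τ : Measure δ) [SFinite μ] [SFinite ν] [SFinite ρ] [SFinite τ] :
    MeasurePreserving (fun q : α × β × γ × δ => ((q.1, q.2.1, q.2.2.1), q.2.2.2))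
      (μ.prod (ν.prod (ρ.prod τ))) ((μ.prod (ν.prod ρ)).prod τ) :=
  (measurePreserving_prodAssoc μ (ν.prod ρ) τ).symm.comp
    ((MeasurePreserving.id μ).prod (measurePreserving_prodAssoc ν ρ τ).symm)

end ProductMeasures

section HorizontalLines

theorem continuous_hLine :
    Continuous fun q : ℝ × ℝ × ℝ × ℝ => hLine q.1 q.2.1 q.2.2.1 q.2.2.2 := by
  unfold hLine
  fun_prop

theorem measurePreserving_reflection (θ : ℝ) :
    MeasurePreserving fun x : ℝ × ℝ =>
      (x.1 * cos θ + x.2 * sin θ, x.1 * sin θ - x.2 * cos θ) := by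
  have hcomplex : MeasurePreserving fun z : ℂ => rotation (Circle.exp θ) (Complex.conjLIE z) :=
    (Complex.conjLIE.trans (rotation (Circle.exp θ))).measurePreserving
  convert Complex.volume_preserving_equiv_real_prod.comp
    (hcomplex.comp Complex.volume_preserving_equiv_real_prod.symm) using 1
  ext x <;> simp [rotation_apply, Circle.coe_exp, Complex.exp_ofReal_mul_I_re,
    Complex.exp_ofReal_mul_I_im] <;> ring

theorem measurePreserving_hLine (θ : ℝ) :
    MeasurePreserving fun q : ℝ × ℝ × ℝ => hLine q.1 θ q.2.1 q.2.2 := by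
  have hskew : MeasurePreserving fun q : (ℝ × ℝ) × ℝ =>
      ((q.1.1 * cos θ + q.1.2 * sin θ, q.1.1 * sin θ - q.1.2 * cos θ), q.2 + q.1.2 * q.1.1) :=
    (measurePreserving_reflection θ).skew_product (g := fun x t => t + x.2 * x.1) (by fun_prop)
      (.of_forall fun x => map_add_right_eq_self volume _)
  exact (volume_preserving_prodAssoc.comp hskew).comp <|
    Measure.measurePreserving_swap.comp (measurePreserving_prod_left_comm volume volume volume)

theorem measurePreserving_angle_hLine (τ : Measure ℝ) [SFinite τ] :
    MeasurePreserving
      (fun q : ℝ × ℝ × ℝ × ℝ => (q.2.1, hLine q.1 q.2.1 q.2.2.1 q.2.2.2))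
      (volume.prod (τ.prod volume)) (τ.prod volume) :=
  ((MeasurePreserving.id τ).skew_product
    (g := fun θ (q : ℝ × ℝ × ℝ) => hLine q.1 θ q.2.1 q.2.2)
    (continuous_hLine.measurable.comp
      (f := fun x : ℝ × ℝ × ℝ × ℝ => (x.2.1, x.1, x.2.2)) (by fun_prop))
    (.of_forall fun θ => (measurePreserving_hLine θ).map_eq)).comp
      (measurePreserving_prod_left_comm volume τ volume)

/-- Horizontal convexity in the Heisenberg group: every horizontal line meets `D` in an interval of
parameters. -/
def HorizontallyConvex (D : Set (ℝ × ℝ × ℝ)) : Prop :=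
  ∀ p θ t, {s | hLine p θ t s ∈ D}.OrdConnected

theorem HorizontallyConvex.of_convex {D : Set (ℝ × ℝ × ℝ)} (hD : Convex ℝ D) :
    HorizontallyConvex D := by
  intro p θ t
  refine Convex.ordConnected fun x hx y hy a b ha hb hab => ?_
  have haffine : hLine p θ t (a • x + b • y) = a • hLine p θ t x + b • hLine p θ t y := by
    obtain rfl : b = 1 - a := by linarith
    ext <;> simp [hLine] <;> ring
  rw [mem_ofPred_eq, haffine]
  exact hD hx hy ha hb hab

/-- The kinematic density `dp dθ dt` on oriented horizontal lines, with `θ` confined to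
`[0, 2π)`. -/
def lineMeasure : Measure (ℝ × ℝ × ℝ) :=
  volume.prod ((volume.restrict (Ico 0 (2 * π))).prod volume)

instance : SFinite lineMeasure := by
  unfold lineMeasure
  infer_instance

/-- The pairs of a horizontal line `(p, θ, t)` and a parameter `s` at which it lies in `D`. -/
def lineIncidence (D : Set (ℝ × ℝ × ℝ)) : Set ((ℝ × ℝ × ℝ) × ℝ) :=
  {q | hLine q.1.1 q.1.2.1 q.1.2.2 q.2 ∈ D}

variable {D : Set (ℝ × ℝ × ℝ)}

theorem isOpen_lineIncidence (hD : IsOpen D) : IsOpen (lineIncidence D) :=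
  hD.preimage (continuous_hLine.comp
    (f := fun q : (ℝ × ℝ × ℝ) × ℝ => (q.1.1, q.1.2.1, q.1.2.2, q.2)) (by fun_prop))

theorem measurableSet_lineIncidence (hD : MeasurableSet D) : MeasurableSet (lineIncidence D) :=
  hD.preimage (continuous_hLine.measurable.comp
    (f := fun q : (ℝ × ℝ × ℝ) × ℝ => (q.1.1, q.1.2.1, q.1.2.2, q.2)) (by fun_prop))

theorem lineMeasure_prod_lineIncidence (hD : MeasurableSet D) :
    lineMeasure.prod volume (lineIncidence D) = ENNReal.ofReal (2 * π) * volume D := by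
  calc
    lineMeasure.prod volume (lineIncidence D)
      = volume.prod ((volume.restrict (Ico 0 (2 * π))).prod volume)
          {q : ℝ × ℝ × ℝ × ℝ | hLine q.1 q.2.1 q.2.2.1 q.2.2.2 ∈ D} :=
        ((measurePreserving_prod_split_last volume _ volume volume).measure_preimage
          (measurableSet_lineIncidence hD).nullMeasurableSet).symm
    _ = (volume.restrict (Ico 0 (2 * π))).prod volume (univ ×ˢ D) := by
        rw [← (measurePreserving_angle_hLine _).measure_preimage
          (MeasurableSet.univ.prod hD).nullMeasurableSet]
        simp only [preimage, mem_prod, mem_univ, true_and]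
    _ = ENNReal.ofReal (2 * π) * volume D := by
        rw [Measure.prod_prod, Measure.restrict_apply_univ, Real.volume_Ico, sub_zero]

theorem lineMeasure_fst_image_lineIncidence (hD : IsOpen D) :
    lineMeasure (Prod.fst '' lineIncidence D) = volume (lineMeet D) := by
  rw [lineMeasure, ← volume_restrict_snd_fst,
    Measure.restrict_apply (isOpenMap_fst _ (isOpen_lineIncidence hD)).measurableSet]
  congr 1
  ext q
  simp [lineIncidence, lineMeet, and_comm]

theorem lineMeasure_prod_fiberThickening (hD : IsOpen D) (ℓ : ℝ) :
    lineMeasure.prod volume (fiberThickening ℓ (lineIncidence D)) = volume (segMeet D ℓ) := by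
  have hangle : MeasurableSet {q : ℝ × ℝ × ℝ × ℝ | q.2.1 ∈ Ico 0 (2 * π)} :=
    measurableSet_Ico.preimage (by fun_prop)
  rw [lineMeasure, ← (measurePreserving_prod_split_last volume _ volume volume).measure_preimage
      (isOpen_fiberThickening ℓ (isOpen_lineIncidence hD)).measurableSet.nullMeasurableSet,
    ← Measure.volume_eq_prod, ← volume_restrict_snd_fst, Measure.restrict_apply' hangle]
  congr 1
  ext q
  simp only [fiberThickening, lineIncidence, segMeet, mem_inter_iff, mem_preimage, mem_ofPred_eq,
    and_comm]

theorem volume_segMeet (hconv : HorizontallyConvex D) (hopen : IsOpen D) {ℓ : ℝ} (hℓ : 0 ≤ ℓ) :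
    volume (segMeet D ℓ) =
      ENNReal.ofReal (2 * π) * volume D + ENNReal.ofReal ℓ * volume (lineMeet D) := by
  rw [← lineMeasure_prod_fiberThickening hopen,
    prod_volume_fiberThickening lineMeasure (isOpen_lineIncidence hopen)
      (fun x => hconv x.1 x.2.1 x.2.2) hℓ,
    lineMeasure_prod_lineIncidence hopen.measurableSet, lineMeasure_fst_image_lineIncidence hopen]

end HorizontalLines

theorem prob_segment_meets_inner_convex_general
    (D₁ D₂ : Set (ℝ × ℝ × ℝ)) (hconv₁ : HorizontallyConvex D₁) (hopen₁ : IsOpen D₁)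
    (hne₂ : D₂.Nonempty) (hconv₂ : HorizontallyConvex D₂) (hopen₂ : IsOpen D₂)
    (ℓ : ℝ) (hℓ : 0 ≤ ℓ) :
    volume (segMeet D₁ ℓ) / volume (segMeet D₂ ℓ) =
      (ENNReal.ofReal (2 * π) * volume D₁ + ENNReal.ofReal ℓ * volume (lineMeet D₁)) /
        (ENNReal.ofReal (2 * π) * volume D₂ + ENNReal.ofReal ℓ * volume (lineMeet D₂)) := by
  rw [volume_segMeet hconv₁ hopen₁ hℓ, volume_segMeet hconv₂ hopen₂ hℓ]

/-- Containment probability: for nonempty bounded open convex `D₁ ⊆ D₂ ⊂ ℝ³`, the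
probability that a random positioned segment of length `ℓ` meeting `D₂` also meets
`D₁` is `(2π·vol(D₁) + ℓ·m(D₁)) / (2π·vol(D₂) + ℓ·m(D₂))`. -/
theorem prob_segment_meets_inner_convex
    (D₁ D₂ : Set (ℝ × ℝ × ℝ)) (hsub : D₁ ⊆ D₂)
    (hne₁ : D₁.Nonempty) (hconv₁ : Convex ℝ D₁)
    (hbdd₁ : Bornology.IsBounded D₁) (hopen₁ : IsOpen D₁)
    (hne₂ : D₂.Nonempty) (hconv₂ : Convex ℝ D₂)
    (hbdd₂ : Bornology.IsBounded D₂) (hopen₂ : IsOpen D₂)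
    (ℓ : ℝ) (hℓ : 0 < ℓ) :
    volume (segMeet D₁ ℓ) / volume (segMeet D₂ ℓ) =
      (ENNReal.ofReal (2 * π) * volume D₁ + ENNReal.ofReal ℓ * volume (lineMeet D₁)) /
        (ENNReal.ofReal (2 * π) * volume D₂ + ENNReal.ofReal ℓ * volume (lineMeet D₂)) :=
  prob_segment_meets_inner_convex_general D₁ D₂ (.of_convex hconv₁) hopen₁
    hne₂ (.of_convex hconv₂) hopen₂ ℓ hℓ.le
end
end

section
/- Let Φ = Φ_{(a,b,c),α} be a pseudohermitian transformation of H₁, and let T_Φ : ℝ × [0,2π) × ℝ → ℝ × [0,2π) × ℝ be the induced map on the parameter space of oriented horizontal lines, i.e. T_Φ(p,θ,t) = (p',θ',t') where (p',θ',t') are the unique parameters with Φ(γ_{p,θ,t}(ℝ)) = γ_{p',θ',t'}(ℝ) and Φ mapping the orientation of γ_{p,θ,t} to that of γ_{p',θ',t'}. Then T_Φ is a measure-preserving bijection for the Lebesgue measure dp dθ dt on ℝ × [0,2π) × ℝ; hence the density dG = dp ∧ dθ ∧ dt for sets of horizontal lines is invariant under the group PSH(1) of pseudohermitian transformations. -/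
open MeasureTheory Real Set

noncomputable section

/-- Rotation `R_α` by angle `α` about the `t`-axis. -/
def rot (α : ℝ) (q : ℝ × ℝ × ℝ) : ℝ × ℝ × ℝ :=
  (q.1 * Real.cos α - q.2.1 * Real.sin α, q.1 * Real.sin α + q.2.1 * Real.cos α, q.2.2)

/-- Heisenberg left translation `L_{(a,b,c)}(x,y,t) = (a+x, b+y, c+t+bx−ay)`. -/
def heisL (Q q : ℝ × ℝ × ℝ) : ℝ × ℝ × ℝ :=
  (Q.1 + q.1, Q.2.1 + q.2.1, Q.2.2 + q.2.2 + Q.2.1 * q.1 - Q.1 * q.2.1)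

/-- Pseudohermitian transformation `Φ_{Q,α} = L_Q ∘ R_α`. -/
def psh (Q : ℝ × ℝ × ℝ) (α : ℝ) (q : ℝ × ℝ × ℝ) : ℝ × ℝ × ℝ :=
  heisL Q (rot α q)

/-- The parameter space `ℝ × [0,2π) × ℝ` of oriented horizontal lines. -/
def lineParams : Set (ℝ × ℝ × ℝ) := {q | q.2.1 ∈ Set.Ico (0 : ℝ) (2 * π)}

/-!
Lift `T_Φ` to the universal cover `ℝ³` of the space of lines by forgetting the range of the angle:
`R_α` adds `α` to `θ`, and `L_{(a,b,c)}` adds to `p` a function of `θ` alone and then to `t` a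
function of `(p, θ)` alone. The lift is thus a composition of shears and translations, which
preserve Lebesgue measure. It commutes with the deck transformations `θ ↦ θ + 2πn`, and `T_Φ`
agrees with it up to deck transformations, so both `lineParams` and its image under the lift are
fundamental domains, and sets in them with the same saturation have the same measure.
-/

section FundamentalDomain

/-- A strict fundamental domain for the action of `G`: a set that meets each orbit exactly once,
as witnessed by a unique group element. In contrast to `MeasureTheory.IsFundamentalDomain` there
are no exceptional null sets. The additive version is `IsStrictAddFundamentalDomain`. -/
@[to_additive IsStrictAddFundamentalDomain]
def IsStrictFundamentalDomain (G : Type*) {X : Type*} [Group G] [MulAction G X] (s : Set X) :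
    Prop :=
  ∀ x : X, ∃! g : G, g • x ∈ s

variable {G X Y ι : Type*} [Group G] [MulAction G X] [MulAction G Y]

namespace IsStrictFundamentalDomain

variable {s t : Set X} {A : Set ι} {f f' : ι → X}

@[to_additive]
theorem eq_of_mem_orbit (hs : IsStrictFundamentalDomain G s) {x y : X} (hx : x ∈ s) (hy : y ∈ s)
    (hxy : x ∈ MulAction.orbit G y) : x = y := by
  obtain ⟨g, rfl⟩ := hxy
  have hg : g = 1 := (hs y).unique hx (by rwa [one_smul])
  exact hg ▸ one_smul G y

@[to_additive]
theorem image_equiv (hs : IsStrictFundamentalDomain G s) (e : X ≃ Y)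
    (he : ∀ (g : G) (x : X), e (g • x) = g • e x) : IsStrictFundamentalDomain G (e '' s) := by
  intro y
  have hmem (g : G) : g • y ∈ e '' s ↔ g • e.symm y ∈ s := by
    rw [e.image_eq_preimage_symm, mem_preimage,
      e.symm_apply_eq.2 (by rw [he, e.apply_symm_apply] : g • y = e (g • e.symm y))]
  simpa only [hmem] using hs (e.symm y)

@[to_additive]
theorem bijOn_of_mem_orbit (hs : IsStrictFundamentalDomain G s)
    (ht : IsStrictFundamentalDomain G t) (hf : BijOn f A s) (hf' : MapsTo f' A t)
    (hff' : ∀ i ∈ A, f' i ∈ MulAction.orbit G (f i)) : BijOn f' A t := by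
  refine ⟨hf', fun i hi j hj hij => hf.injOn hi hj ?_, fun y hy => ?_⟩
  · refine hs.eq_of_mem_orbit (hf.mapsTo hi) (hf.mapsTo hj) ?_
    rw [← MulAction.orbit_eq_iff, ← MulAction.orbit_eq_iff.2 (hff' i hi), hij,
      MulAction.orbit_eq_iff.2 (hff' j hj)]
  · obtain ⟨g, hg⟩ := (hs y).exists
    obtain ⟨i, hi, hfi⟩ := hf.surjOn hg
    refine ⟨i, hi, ht.eq_of_mem_orbit (hf' hi) hy ?_⟩
    rw [← MulAction.orbit_smul g y, ← hfi]
    exact hff' i hi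

@[to_additive]
theorem setOf_exists_mem_orbit_inter (hs : IsStrictFundamentalDomain G s) (hf : MapsTo f A s)
    (hff' : ∀ i ∈ A, f i ∈ MulAction.orbit G (f' i)) :
    {x | ∃ i ∈ A, x ∈ MulAction.orbit G (f' i)} ∩ s = f '' A := by
  ext x
  constructor
  · rintro ⟨⟨i, hi, hxi⟩, hx⟩
    refine ⟨i, hi, (hs.eq_of_mem_orbit hx (hf hi) ?_).symm⟩
    rwa [MulAction.orbit_eq_iff.2 (hff' i hi)]
  · rintro ⟨i, hi, rfl⟩
    exact ⟨⟨i, hi, hff' i hi⟩, hf hi⟩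

variable [Countable G] [MeasurableSpace X] [MeasurableConstSMul G X]

@[to_additive]
theorem measure_image_eq_of_mem_orbit (μ : Measure X) [SMulInvariantMeasure G X μ]
    (hs : IsStrictFundamentalDomain G s) (ht : IsStrictFundamentalDomain G t)
    (hsm : NullMeasurableSet s μ) (htm : NullMeasurableSet t μ)
    (hf : MapsTo f A s) (hf' : MapsTo f' A t) (hfA : MeasurableSet (f '' A))
    (hff' : ∀ i ∈ A, f' i ∈ MulAction.orbit G (f i)) : μ (f' '' A) = μ (f '' A) := by
  set B : Set X := {x | ∃ i ∈ A, x ∈ MulAction.orbit G (f i)}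
  have hB_eq : B = ⋃ g : G, (g • ·) ⁻¹' (f '' A) := by
    ext x
    simp_rw [B, mem_ofPred_eq, MulAction.mem_orbit_symm (a₁ := x), MulAction.mem_orbit_iff,
      mem_iUnion, mem_preimage, mem_image]
    grind
  have hB_meas : MeasurableSet B :=
    hB_eq ▸ .iUnion fun g => hfA.preimage (measurable_const_smul g)
  have hB_inv (g : G) : (g • ·) ⁻¹' B = B := by
    ext x
    simp only [B, mem_preimage, mem_ofPred_eq, ← MulAction.orbit_eq_iff, MulAction.orbit_smul]
  rw [← ht.setOf_exists_mem_orbit_inter hf' hff',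
    ← hs.setOf_exists_mem_orbit_inter hf fun i _ => MulAction.mem_orbit_self (f i)]
  exact (IsFundamentalDomain.mk' htm ht).measure_set_eq (.mk' hsm hs) hB_meas hB_inv

end IsStrictFundamentalDomain

end FundamentalDomain

section Shear

variable {X G : Type*} [MeasurableSpace X] [MeasurableSpace G] [AddGroup G] [MeasurableAdd₂ G]
  [MeasurableNeg G]

/-- The shear `(x, y) ↦ (x, y + k x)` of `X × G` along the fibres of the projection to `X`. -/
def shearAddRight (k : X → G) (hk : Measurable k) : X × G ≃ᵐ X × G where
  toEquiv := .prodShear (.refl X) fun x => .addRight (k x)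
  measurable_toFun := measurable_fst.prodMk (measurable_snd.add (hk.comp measurable_fst))
  measurable_invFun := measurable_fst.prodMk (measurable_snd.add (hk.comp measurable_fst).neg)

theorem measurePreserving_shearAddRight (μ : Measure X) [SFinite μ] (ν : Measure G) [SFinite ν]
    [ν.IsAddRightInvariant] (k : X → G) (hk : Measurable k) :
    MeasurePreserving (shearAddRight k hk) (μ.prod ν) (μ.prod ν) :=
  (MeasurePreserving.id μ).skew_product (g := fun x y => y + k x)
    (measurable_snd.add (hk.comp measurable_fst))
    (.of_forall fun x => (measurePreserving_add_right ν (k x)).map_eq)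

end Shear

section HorizontalLines

-- Unaided instance search exceeds `synthInstance.maxSize` on the nested product.
instance isAddLeftInvariant_volume_real_prod_real_prod_real :
    (volume : Measure (ℝ × ℝ × ℝ)).IsAddLeftInvariant :=
  Measure.prod.instIsAddLeftInvariant

/-- The component of `(a, b)` along the unit normal `(cos θ, sin θ)` of the projection of
`γ_{p,θ,t}` to the plane. -/
def normalComponent (a b θ : ℝ) : ℝ := a * cos θ + b * sin θ

/-- The component of `(a, b)` along the direction `(sin θ, -cos θ)` of the projection of
`γ_{p,θ,t}` to the plane. -/
def tangentComponent (a b θ : ℝ) : ℝ := a * sin θ - b * cos θ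

@[fun_prop]
theorem measurable_normalComponent (a b : ℝ) : Measurable (normalComponent a b) := by
  unfold normalComponent; fun_prop

@[fun_prop]
theorem measurable_tangentComponent (a b : ℝ) : Measurable (tangentComponent a b) := by
  unfold tangentComponent; fun_prop

theorem rot_hLine (α p θ t s : ℝ) : rot α (hLine p θ t s) = hLine p (α + θ) t s := by
  simp only [rot, hLine, cos_add, sin_add, Prod.mk.injEq]
  exact ⟨by ring, by ring, trivial⟩

theorem heisL_hLine (a b c p θ t s : ℝ) :
    heisL (a, b, c) (hLine p θ t s) =
      hLine (p + normalComponent a b θ) θ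
        (t + (c - tangentComponent a b θ * (2 * p + normalComponent a b θ)))
        (s + tangentComponent a b θ) := by
  have hθ := sin_sq_add_cos_sq θ
  simp only [heisL, hLine, normalComponent, tangentComponent, Prod.mk.injEq]
  refine ⟨?_, ?_, by ring⟩
  · linear_combination -a * hθ
  · linear_combination -b * hθ

/-- The map induced by `L_{(a,b,c)}` on the parameters `(p, θ, t)` of horizontal lines, where `θ`
ranges over all of `ℝ`: a shear in `p` followed by a shear in `t`, the latter expressed through the
new value of `p`. -/
def heisLLift (a b c : ℝ) : ℝ × ℝ × ℝ ≃ᵐ ℝ × ℝ × ℝ :=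
  (MeasurableEquiv.prodComm.trans <|
    (shearAddRight (fun x : ℝ × ℝ => normalComponent a b x.1) (by fun_prop)).trans
      MeasurableEquiv.prodComm).trans <|
  MeasurableEquiv.prodAssoc.symm.trans <|
    (shearAddRight (fun x : ℝ × ℝ =>
      c - tangentComponent a b x.2 * (2 * x.1 - normalComponent a b x.2)) (by fun_prop)).trans
      MeasurableEquiv.prodAssoc

theorem heisLLift_apply (a b c p θ t : ℝ) :
    heisLLift a b c (p, θ, t) = (p + normalComponent a b θ, θ,
      t + (c - tangentComponent a b θ * (2 * p + normalComponent a b θ))) := by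
  have h : heisLLift a b c (p, θ, t) = (p + normalComponent a b θ, θ,
      t + (c - tangentComponent a b θ *
        (2 * (p + normalComponent a b θ) - normalComponent a b θ))) := rfl
  rw [h]; ring_nf

theorem measurePreserving_heisLLift (a b c : ℝ) : MeasurePreserving (heisLLift a b c) :=
  have hp := Measure.measurePreserving_swap.comp <|
    (measurePreserving_shearAddRight (volume : Measure (ℝ × ℝ)) (volume : Measure ℝ) _ _).comp
      Measure.measurePreserving_swap
  have ht := volume_preserving_prodAssoc.comp <|
    (measurePreserving_shearAddRight (volume : Measure (ℝ × ℝ)) (volume : Measure ℝ) _ _).comp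
      volume_preserving_prodAssoc.symm
  ht.comp hp

/-- The map induced by `Φ_{(a,b,c),α}` on the parameters `(p, θ, t)` of horizontal lines, where `θ`
ranges over all of `ℝ`. -/
def pshLift (a b c α : ℝ) : ℝ × ℝ × ℝ ≃ᵐ ℝ × ℝ × ℝ :=
  (MeasurableEquiv.addLeft ((0, α, 0) : ℝ × ℝ × ℝ)).trans (heisLLift a b c)

theorem pshLift_apply (a b c α p θ t : ℝ) :
    pshLift a b c α (p, θ, t) = (p + normalComponent a b (α + θ), α + θ,
      t + (c - tangentComponent a b (α + θ) * (2 * p + normalComponent a b (α + θ)))) := by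
  simp [pshLift, heisLLift_apply]

theorem measurePreserving_pshLift (a b c α : ℝ) : MeasurePreserving (pshLift a b c α) :=
  (measurePreserving_heisLLift a b c).comp (measurePreserving_add_left volume _)

theorem psh_hLine (a b c α p θ t s : ℝ) :
    psh (a, b, c) α (hLine p θ t s) =
      hLine (pshLift a b c α (p, θ, t)).1 (pshLift a b c α (p, θ, t)).2.1
        (pshLift a b c α (p, θ, t)).2.2 (s + tangentComponent a b (α + θ)) := by
  rw [psh, rot_hLine, heisL_hLine, pshLift_apply]

/-- The group of translations `(p, θ, t) ↦ (p, θ + 2πn, t)`, whose orbits in `ℝ³` correspond to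
oriented horizontal lines. -/
abbrev anglePeriods : AddSubgroup (ℝ × ℝ × ℝ) := AddSubgroup.zmultiples (0, 2 * π, 0)

theorem zsmul_anglePeriod_add (n : ℤ) (p θ t : ℝ) :
    n • ((0, 2 * π, 0) : ℝ × ℝ × ℝ) + (p, θ, t) = (p, θ + n * (2 * π), t) := by
  simp [add_comm]

theorem mem_orbit_anglePeriods_of_hLine_eq {q q' : ℝ × ℝ × ℝ} {h h' : ℝ}
    (heq : ∀ s, hLine q.1 q.2.1 q.2.2 (s + h) = hLine q'.1 q'.2.1 q'.2.2 (s + h')) :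
    q' ∈ AddAction.orbit anglePeriods q := by
  obtain ⟨p, θ, t⟩ := q
  obtain ⟨p', θ', t'⟩ := q'
  have heq₀ := heq 0
  have heq₁ := heq 1
  simp only [hLine, Prod.mk.injEq] at heq₀ heq₁
  obtain ⟨hx₀, hy₀, ht₀⟩ := heq₀
  obtain ⟨hx₁, hy₁, ht₁⟩ := heq₁
  have hsin : sin θ' = sin θ := by linarith
  have hcos : cos θ' = cos θ := by linarith
  obtain rfl : p' = p := by linarith
  obtain rfl : h' = h := by
    rw [hsin, hcos] at hx₀ hy₀
    linear_combination -sin θ * hx₀ + cos θ * hy₀ + (h - h') * sin_sq_add_cos_sq θ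
  obtain rfl : t' = t := by linarith
  obtain ⟨n, hn⟩ := Angle.angle_eq_iff_two_pi_dvd_sub.1 (Angle.cos_sin_inj hcos hsin)
  obtain rfl : θ' = θ + n * (2 * π) := by linarith
  exact ⟨⟨_, n, rfl⟩, zsmul_anglePeriod_add n p' θ t'⟩

theorem pshLift_vadd (a b c α : ℝ) (g : anglePeriods) (q : ℝ × ℝ × ℝ) :
    pshLift a b c α (g +ᵥ q) = g +ᵥ pshLift a b c α q := by
  obtain ⟨_, n, rfl⟩ := g
  obtain ⟨p, θ, t⟩ := q
  change pshLift a b c α (n • (0, 2 * π, 0) + (p, θ, t)) =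
    n • (0, 2 * π, 0) + pshLift a b c α (p, θ, t)
  simp only [pshLift_apply, zsmul_anglePeriod_add, normalComponent, tangentComponent, ← add_assoc,
    cos_add_int_mul_two_pi, sin_add_int_mul_two_pi]

theorem measurableSet_lineParams : MeasurableSet lineParams :=
  measurableSet_Ico.preimage (by fun_prop)

theorem isStrictAddFundamentalDomain_lineParams :
    IsStrictAddFundamentalDomain anglePeriods lineParams := by
  rintro ⟨p, θ, t⟩
  have hinj : Function.Injective fun n : ℤ => n • ((0, 2 * π, 0) : ℝ × ℝ × ℝ) :=
    fun m n hmn => by simpa [pi_ne_zero] using hmn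
  have hbij : Function.Bijective fun n : ℤ => (⟨n • (0, 2 * π, 0), n, rfl⟩ : anglePeriods) :=
    (Equiv.ofInjective _ hinj).bijective
  refine hbij.existsUnique_iff.2 ?_
  change ∃! n : ℤ, n • ((0, 2 * π, 0) : ℝ × ℝ × ℝ) + (p, θ, t) ∈ lineParams
  simp only [zsmul_anglePeriod_add]
  simpa only [lineParams, mem_ofPred_eq, zsmul_eq_mul, zero_add] using
    existsUnique_add_zsmul_mem_Ico two_pi_pos θ 0

end HorizontalLines

/-- The map `T_Φ` induced on the parameter space of oriented horizontal lines by a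
pseudohermitian transformation `Φ = Φ_{(a,b,c),α}` (sending `γ_{p,θ,t}`, with its
orientation, to the line `Φ ∘ γ_{p,θ,t}`) is a bijection of `ℝ × [0,2π) × ℝ` onto
itself preserving the Lebesgue measure `dp dθ dt`: the density of horizontal lines
is invariant under `PSH(1)`. -/
theorem induced_line_map_measure_preserving
    (a b c α : ℝ) (T : ℝ × ℝ × ℝ → ℝ × ℝ × ℝ)
    (hT : ∀ p θ t : ℝ, θ ∈ Set.Ico (0 : ℝ) (2 * π) →
      (T (p, θ, t)).2.1 ∈ Set.Ico (0 : ℝ) (2 * π) ∧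
      ∃ h₀ : ℝ, ∀ s : ℝ,
        psh (a, b, c) α (hLine p θ t s) =
          hLine (T (p, θ, t)).1 (T (p, θ, t)).2.1 (T (p, θ, t)).2.2 (s + h₀)) :
    Set.BijOn T lineParams lineParams ∧
      ∀ A : Set (ℝ × ℝ × ℝ), MeasurableSet A → A ⊆ lineParams →
        volume (T '' A) = volume A := by
  have hmaps : MapsTo T lineParams lineParams := fun q hq => (hT q.1 q.2.1 q.2.2 hq).1
  have horbit : ∀ q ∈ lineParams, T q ∈ AddAction.orbit anglePeriods (pshLift a b c α q) := by
    rintro ⟨p, θ, t⟩ hq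
    obtain ⟨-, h₀, hline⟩ := hT p θ t hq
    exact mem_orbit_anglePeriods_of_hLine_eq fun s =>
      (psh_hLine a b c α p θ t s).symm.trans (hline s)
  have hdom := isStrictAddFundamentalDomain_lineParams
  have hdom' : IsStrictAddFundamentalDomain anglePeriods (pshLift a b c α '' lineParams) :=
    hdom.image_equiv (pshLift a b c α).toEquiv (pshLift_vadd a b c α)
  refine ⟨hdom'.bijOn_of_mem_orbit hdom (pshLift a b c α).injective.injOn.bijOn_image hmaps horbit,
    fun A hA hAs => ?_⟩
  have himage {B : Set (ℝ × ℝ × ℝ)} (hB : MeasurableSet B) : MeasurableSet (pshLift a b c α '' B) :=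
    (pshLift a b c α).measurableSet_image.2 hB
  calc volume (T '' A) = volume (pshLift a b c α '' A) :=
        hdom'.measure_image_eq_of_mem_orbit volume hdom
          (himage measurableSet_lineParams).nullMeasurableSet
          measurableSet_lineParams.nullMeasurableSet ((mapsTo_image _ _).mono_left hAs)
          (hmaps.mono_left hAs) (himage hA) fun q hq => horbit q (hAs hq)
    _ = volume A := by
        rw [← (measurePreserving_pshLift a b c α).measure_preimage_equiv,
          (pshLift a b c α).injective.preimage_image]
end
end

section
/- The map Ψ : ℝ × [0,2π) × ℝ × ℝ → ℝ³ × [0,2π) defined by Ψ(p,θ,t,h) = (γ_{p,θ,t}(h), θ) = (p cosθ + h sinθ, p sinθ − h cosθ, t + hp, θ) is a bijection, and it pushes the four-dimensional Lebesgue measure dp dθ dt dh forward to the Lebesgue measure da db dc dφ on ℝ³ × [0,2π); equivalently, the kinematic density dK = da ∧ db ∧ dc ∧ dφ of the group of rigid motions equals dG ∧ dh = dp ∧ dθ ∧ dt ∧ dh in these coordinates. -/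
open MeasureTheory Real Set

noncomputable section

/-- The change of coordinates `Ψ(p,θ,t,h) = (γ_{p,θ,t}(h), θ)
= ((p cosθ + h sinθ, p sinθ − h cosθ, t + hp), θ)` from line coordinates `(p,θ,t,h)`
to rigid-motion coordinates `((a,b,c),φ)`. -/
def kinemCoord (q : ℝ × ℝ × ℝ × ℝ) : (ℝ × ℝ × ℝ) × ℝ :=
  (hLine q.1 q.2.1 q.2.2.1 q.2.2.2, q.2.1)

/-!
Once `φ = θ` is fixed, `(p, h) ↦ (a, b)` is a linear reflection of the plane, followed in the third
coordinate by the translation `t ↦ t + h * p`. A reflection is its own inverse, which gives `Ψ⁻¹`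
explicitly; its determinant squares to one, so it preserves area. Translations preserve length, and
Fubini's theorem, applied first over `(p, h)` and then over `θ`, assembles these facts into
invariance of the four-dimensional volume.
-/

section LinearInvolution

lemma abs_det_eq_one_of_involutive {R M : Type*} [CommRing R] [LinearOrder R]
    [IsStrictOrderedRing R] [AddCommGroup M] [Module R M] {f : M →ₗ[R] M}
    (hf : Function.Involutive f) : |LinearMap.det f| = 1 := by
  have hff : f * f = 1 := LinearMap.ext hf
  have hdet : LinearMap.det f * LinearMap.det f = 1 := by rw [← map_mul, hff, map_one]
  exact (abs_eq zero_le_one).2 (mul_self_eq_one_iff.1 hdet)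

variable {E : Type*} [NormedAddCommGroup E] [NormedSpace ℝ E] [FiniteDimensional ℝ E]
  [MeasurableSpace E] [BorelSpace E] {f : E →ₗ[ℝ] E}

lemma measurePreserving_of_abs_det_eq_one (μ : Measure E) [μ.IsAddHaarMeasure]
    (hf : |LinearMap.det f| = 1) : MeasurePreserving f μ μ where
  measurable := f.continuous_of_finiteDimensional.measurable
  map_eq := by
    have hdet : LinearMap.det f ≠ 0 := abs_ne_zero.1 (hf ▸ one_ne_zero)
    rw [Measure.map_linearMap_addHaar_eq_smul_addHaar μ hdet, abs_inv, hf, inv_one,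
      ENNReal.ofReal_one, one_smul]

lemma measurePreserving_of_involutive (μ : Measure E) [μ.IsAddHaarMeasure]
    (hf : Function.Involutive f) : MeasurePreserving f μ μ :=
  measurePreserving_of_abs_det_eq_one μ (abs_det_eq_one_of_involutive hf)

end LinearInvolution

lemma measurePreserving_prod_regroup {α β γ δ : Type*} [MeasurableSpace α] [MeasurableSpace β]
    [MeasurableSpace γ] [MeasurableSpace δ] (μ : Measure α) (ν : Measure β) (ρ : Measure γ)
    (σ : Measure δ) [SFinite μ] [SFinite ν] [SFinite ρ] [SFinite σ] :
    MeasurePreserving (fun q : α × β × γ × δ => (q.2.1, (q.1, q.2.2.2), q.2.2.1))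
      (μ.prod (ν.prod (ρ.prod σ))) (ν.prod ((μ.prod σ).prod ρ)) :=
  have hswap : MeasurePreserving (fun q : α × β × γ × δ => ((q.2.1, q.1), q.2.2.2, q.2.2.1))
      (μ.prod (ν.prod (ρ.prod σ))) ((ν.prod μ).prod (σ.prod ρ)) :=
    (Measure.measurePreserving_swap.prod Measure.measurePreserving_swap).comp
      (measurePreserving_prodAssoc μ ν (ρ.prod σ)).symm
  ((MeasurePreserving.id ν).prod (measurePreserving_prodAssoc μ σ ρ).symm).comp
    ((measurePreserving_prodAssoc ν μ (σ.prod ρ)).comp hswap)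

/-- The linear reflection of the plane in the line of direction `θ / 2`. It sends `(p, h)` to the
horizontal projection of `γ_{p,θ,t}(h)`. -/
def planeReflection (θ : ℝ) : ℝ × ℝ →ₗ[ℝ] ℝ × ℝ where
  toFun x := (x.1 * cos θ + x.2 * sin θ, x.1 * sin θ - x.2 * cos θ)
  map_add' x y := by ext <;> simp only [Prod.fst_add, Prod.snd_add] <;> ring
  map_smul' r x := by
    ext <;> simp only [Prod.smul_fst, Prod.smul_snd, smul_eq_mul, RingHom.id_apply] <;> ring

lemma planeReflection_apply (θ : ℝ) (x : ℝ × ℝ) :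
    planeReflection θ x = (x.1 * cos θ + x.2 * sin θ, x.1 * sin θ - x.2 * cos θ) :=
  rfl

lemma planeReflection_involutive (θ : ℝ) : Function.Involutive (planeReflection θ) := by
  rintro ⟨x, y⟩
  ext <;> simp only [planeReflection_apply]
  · linear_combination x * sin_sq_add_cos_sq θ
  · linear_combination y * sin_sq_add_cos_sq θ

lemma hLine_eq_prodAssoc_planeReflection (p θ t s : ℝ) :
    hLine p θ t s = Equiv.prodAssoc ℝ ℝ ℝ (planeReflection θ (p, s), t + s * p) :=
  rfl

lemma measurePreserving_hLine_s8 (θ : ℝ) :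
    MeasurePreserving (fun x : (ℝ × ℝ) × ℝ => hLine x.1.1 θ x.2 x.1.2) :=
  have hskew : MeasurePreserving
      (fun x : (ℝ × ℝ) × ℝ => (planeReflection θ x.1, x.2 + x.1.2 * x.1.1)) :=
    (measurePreserving_of_involutive volume (planeReflection_involutive θ)).skew_product
      (g := fun (x : ℝ × ℝ) t => t + x.2 * x.1) (by fun_prop)
      (ae_of_all _ fun x => map_add_right_eq_self volume (x.2 * x.1))
  volume_preserving_prodAssoc.comp hskew

/-- The inverse of `kinemCoord`: the coordinates `(p, θ, t, h)` for which `γ_{p,θ,t}(h)` is the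
given point of `ℝ³` and `θ` is the given angle. -/
def lineCoord (q : (ℝ × ℝ × ℝ) × ℝ) : ℝ × ℝ × ℝ × ℝ :=
  let x := planeReflection q.2 (q.1.1, q.1.2.1)
  (x.1, q.2, q.1.2.2 - x.2 * x.1, x.2)

lemma leftInverse_lineCoord_kinemCoord : Function.LeftInverse lineCoord kinemCoord := by
  rintro ⟨p, θ, t, h⟩
  simp [kinemCoord, lineCoord, hLine_eq_prodAssoc_planeReflection, planeReflection_involutive θ _]

lemma rightInverse_lineCoord_kinemCoord : Function.RightInverse lineCoord kinemCoord := by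
  rintro ⟨⟨a, b, c⟩, φ⟩
  simp [kinemCoord, lineCoord, hLine_eq_prodAssoc_planeReflection, planeReflection_involutive φ _]

lemma kinemCoord_bijective : Function.Bijective kinemCoord :=
  Function.bijective_iff_has_inverse.2
    ⟨lineCoord, leftInverse_lineCoord_kinemCoord, rightInverse_lineCoord_kinemCoord⟩

lemma measurePreserving_kinemCoord : MeasurePreserving kinemCoord :=
  have hfiber : MeasurePreserving
      (fun q : ℝ × (ℝ × ℝ) × ℝ => (q.1, hLine q.2.1.1 q.1 q.2.2 q.2.1.2)) :=
    (MeasurePreserving.id volume).skew_product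
      (g := fun θ (x : (ℝ × ℝ) × ℝ) => hLine x.1.1 θ x.2 x.1.2) (by unfold hLine; fun_prop)
      (ae_of_all _ fun θ => (measurePreserving_hLine_s8 θ).map_eq)
  Measure.measurePreserving_swap.comp
    (hfiber.comp (measurePreserving_prod_regroup volume volume volume volume))

theorem kinemCoord_bijective_measure_preserving_general :
    Function.Bijective kinemCoord ∧ MeasurePreserving kinemCoord :=
  ⟨kinemCoord_bijective, measurePreserving_kinemCoord⟩

/-- `Ψ` is a bijection from `ℝ × [0,2π) × ℝ × ℝ` (coordinates `(p,θ,t,h)`) onto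
`ℝ³ × [0,2π)` (coordinates `((a,b,c),φ)`), pushing the Lebesgue measure
`dp dθ dt dh` forward to the Lebesgue measure `da db dc dφ`: the kinematic density
`dK = da ∧ db ∧ dc ∧ dφ` equals `dG ∧ dh = dp ∧ dθ ∧ dt ∧ dh`. -/
theorem kinemCoord_bijective_measure_preserving :
    Set.BijOn kinemCoord {q : ℝ × ℝ × ℝ × ℝ | q.2.1 ∈ Set.Ico (0 : ℝ) (2 * π)}
        {q : (ℝ × ℝ × ℝ) × ℝ | q.2 ∈ Set.Ico (0 : ℝ) (2 * π)} ∧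
      Measure.map kinemCoord
          (volume.restrict {q : ℝ × ℝ × ℝ × ℝ | q.2.1 ∈ Set.Ico (0 : ℝ) (2 * π)}) =
        volume.restrict {q : (ℝ × ℝ × ℝ) × ℝ | q.2 ∈ Set.Ico (0 : ℝ) (2 * π)} := by
  obtain ⟨hbij, hmp⟩ := kinemCoord_bijective_measure_preserving_general
  exact ⟨hbij.bijOn_preimage (t := Prod.snd ⁻¹' Ico 0 (2 * π)),
    (hmp.restrict_preimage (measurable_snd measurableSet_Ico)).map_eq⟩
end
end
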